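/- Assume θ ≥ 0, b ≥ 0 and c ≤ 0 on Ω. If Ψ₁, Ψ₂ ∈ C²(Ω) ∩ C¹(cl(Ω)) are classical solutions of ∇·(a∇Ψ) = bΨ + cΨ^{-θ} in Ω with Ψ₁ > 0 and Ψ₂ > 0 on cl(Ω) and Ψ₁ = Ψ₂ on ∂Ω, then Ψ₁ = Ψ₂ everywhere in Ω. -/

import Mathlib

/-!
Uniqueness by the maximum principle. Suppose `w = Ψ₁ - Ψ₂` is positive somewhere in `Ω`.
Where `w > 0`, monotonicity of `z ↦ b z + c z ^ (-θ)` gives `∇·(a∇w) ≥ 0`. To reach a contradiction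
from this non-strict inequality, `w` is perturbed to `v = w + ε exp (l x₀)`, where `x₀` is one
coordinate. For `l` large compared with `sup |∂₀a| / a₀` the exponential satisfies
`∇·(a∇ exp (l x₀)) = l (∂₀a + l a) exp (l x₀) > 0` (`divA_exp`), so `∇·(a∇v) > 0` wherever
`w > 0`. For `ε` small the maximum of `v` on the compact set `closure Ω` is attained where `w > 0`,
hence at an interior point, and there `∇·(a∇v) ≤ 0` (`divA_nonpos_of_isLocalMax`).
Exchanging `Ψ₁` and `Ψ₂` gives equality.
-/

open Real Set MeasureTheory Filter Topology

/-- Divergence-form operator `∇·(a∇u)(x) = ∑ i ∂_i (a ∂_i u)(x)`. -/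
noncomputable def divA {d : ℕ} (a u : EuclideanSpace ℝ (Fin d) → ℝ)
    (x : EuclideanSpace ℝ (Fin d)) : ℝ :=
  ∑ i : Fin d,
    fderiv ℝ (fun y => a y * fderiv ℝ u y (EuclideanSpace.single i (1 : ℝ))) x
      (EuclideanSpace.single i (1 : ℝ))

/-- Squared Euclidean norm of the gradient `|∇u|²(x)`. -/
noncomputable def gradSq {d : ℕ} (u : EuclideanSpace ℝ (Fin d) → ℝ)
    (x : EuclideanSpace ℝ (Fin d)) : ℝ :=
  ∑ i : Fin d, (fderiv ℝ u x (EuclideanSpace.single i (1 : ℝ))) ^ 2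

section

variable {d : ℕ}

local notation "E" => EuclideanSpace ℝ (Fin d)

lemma differentiableAt_fderiv_apply {u : E → ℝ} {x : E} (hu : ContDiffAt ℝ 2 u x) (e : E) :
    DifferentiableAt ℝ (fun y => fderiv ℝ u y e) x := by
  have h : ContDiffAt ℝ 1 (fderiv ℝ u) x := hu.fderiv_right (by norm_num)
  exact (h.differentiableAt (by norm_num)).clm_apply (differentiableAt_const e)

/-- Second-order necessary condition at a local maximum. The one-dimensional restriction
`t ↦ u (x + t e)` with positive second derivative would also have a local minimum at `0`, hence be
locally constant. -/
lemma fderiv_fderiv_nonpos_of_isLocalMax {u : E → ℝ} {x : E} (hu : ContDiffAt ℝ 2 u x)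
    (hmax : IsLocalMax u x) (e : E) :
    fderiv ℝ (fun y => fderiv ℝ u y e) x e ≤ 0 := by
  have hline : ∀ t : ℝ, HasDerivAt (fun t : ℝ => x + t • e) e t := fun t => by
    simpa using ((hasDerivAt_id t).smul_const e).const_add x
  have hcont : Tendsto (fun t : ℝ => x + t • e) (𝓝 0) (𝓝 x) := by
    simpa using (hline 0).continuousAt.tendsto
  set g : ℝ → ℝ := fun t => u (x + t • e) with hg
  have hev : ∀ᶠ y in 𝓝 x, DifferentiableAt ℝ u y := by
    filter_upwards [hu.eventually (by simp)] with y hy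
    exact hy.differentiableAt (by norm_num)
  have hg1 : deriv g =ᶠ[𝓝 0] fun t => fderiv ℝ u (x + t • e) e := by
    filter_upwards [hcont.eventually hev] with t ht
    exact (ht.hasFDerivAt.comp_hasDerivAt t (hline t)).deriv
  have hg2 : deriv (deriv g) 0 = fderiv ℝ (fun y => fderiv ℝ u y e) x e := by
    rw [hg1.deriv_eq]
    have h := differentiableAt_fderiv_apply hu e
    have h' : HasFDerivAt (fun y => fderiv ℝ u y e)
        (fderiv ℝ (fun y => fderiv ℝ u y e) x) (x + (0 : ℝ) • e) := by
      simpa using h.hasFDerivAt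
    exact (h'.comp_hasDerivAt (0 : ℝ) (hline 0)).deriv
  have hgmax : IsLocalMax g 0 := by
    filter_upwards [hcont.eventually hmax] with t ht
    simpa [hg] using ht
  by_contra! hpos
  rw [← hg2] at hpos
  have hgc : ContinuousAt g 0 := by
    have : ContinuousAt u (x + (0 : ℝ) • e) := by simpa using hu.continuousAt
    exact this.comp (f := fun t : ℝ => x + t • e) (hline 0).continuousAt
  have hgmin : IsLocalMin g 0 :=
    isLocalMin_of_deriv_deriv_pos hpos hgmax.deriv_eq_zero hgc
  have hconst : g =ᶠ[𝓝 0] fun _ => g 0 := by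
    filter_upwards [hgmax, hgmin] with t h1 h2
    exact le_antisymm h1 h2
  have : deriv (deriv g) 0 = 0 := by
    rw [hconst.deriv.deriv_eq]
    simp
  exact hpos.ne' this

lemma divA_nonpos_of_isLocalMax {a u : E → ℝ} {x : E} (ha : DifferentiableAt ℝ a x)
    (hapos : 0 ≤ a x) (hu : ContDiffAt ℝ 2 u x) (hmax : IsLocalMax u x) :
    divA a u x ≤ 0 := by
  refine Finset.sum_nonpos fun i _ => ?_
  rw [fderiv_fun_mul ha (differentiableAt_fderiv_apply hu _)]
  have h := fderiv_fderiv_nonpos_of_isLocalMax hu hmax (EuclideanSpace.single i (1 : ℝ))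
  simp only [hmax.fderiv_eq_zero, smul_apply, zero_apply,
    zero_smul, add_zero, smul_eq_mul]
  exact mul_nonpos_of_nonneg_of_nonpos hapos h

lemma divA_sub_add_mul {a u v h : E → ℝ} {x : E} (ε : ℝ) (ha : DifferentiableAt ℝ a x)
    (hu : ContDiffAt ℝ 2 u x) (hv : ContDiffAt ℝ 2 v x) (hh : ContDiffAt ℝ 2 h x) :
    divA a (fun y => u y - v y + ε * h y) x = divA a u x - divA a v x + ε * divA a h x := by
  have hev : ∀ {f : E → ℝ}, ContDiffAt ℝ 2 f x → ∀ᶠ y in 𝓝 x, DifferentiableAt ℝ f y := by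
    intro f hf
    filter_upwards [hf.eventually (by simp)] with y hy
    exact hy.differentiableAt (by norm_num)
  unfold divA
  rw [Finset.mul_sum, ← Finset.sum_sub_distrib, ← Finset.sum_add_distrib]
  refine Finset.sum_congr rfl fun i _ => ?_
  set e : E := EuclideanSpace.single i (1 : ℝ)
  have heq : (fun y => a y * fderiv ℝ (fun y => u y - v y + ε * h y) y e) =ᶠ[𝓝 x]
      fun y => a y * fderiv ℝ u y e - a y * fderiv ℝ v y e + ε * (a y * fderiv ℝ h y e) := by
    filter_upwards [hev hu, hev hv, hev hh] with y h1 h2 h3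
    have := ((h1.hasFDerivAt.sub h2.hasFDerivAt).add (h3.hasFDerivAt.const_mul ε)).fderiv
    have h4 : fderiv ℝ (fun y => u y - v y + ε * h y) y
        = fderiv ℝ u y - fderiv ℝ v y + ε • fderiv ℝ h y := this
    rw [h4]
    simp only [add_apply, sub_apply, smul_apply, smul_eq_mul]
    ring
  rw [heq.fderiv_eq]
  have d1 := (ha.fun_mul (differentiableAt_fderiv_apply hu e)).hasFDerivAt
  have d2 := (ha.fun_mul (differentiableAt_fderiv_apply hv e)).hasFDerivAt
  have d3 := (ha.fun_mul (differentiableAt_fderiv_apply hh e)).hasFDerivAt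
  have h5 := ((d1.sub d2).add (d3.const_mul ε)).fderiv
  have h6 := congrArg (fun T : E →L[ℝ] ℝ => T e) h5
  simp only [add_apply, sub_apply, smul_apply, smul_eq_mul] at h6
  exact h6

lemma contDiff_exp_coord (i : Fin d) (l : ℝ) : ContDiff ℝ 2 (fun y : E => Real.exp (l * y i)) := by
  fun_prop

lemma divA_exp {a : E → ℝ} {x : E} (ha : DifferentiableAt ℝ a x) (i : Fin d) (l : ℝ) :
    divA a (fun y => Real.exp (l * y i)) x =
      l * (fderiv ℝ a x (EuclideanSpace.single i 1) + l * a x) * Real.exp (l * x i) := by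
  have hd : ∀ y : E, HasFDerivAt (fun y : E => Real.exp (l * y i))
      (Real.exp (l * y i) • (l • (EuclideanSpace.proj i : E →L[ℝ] ℝ))) y := fun y =>
    (((EuclideanSpace.proj i : E →L[ℝ] ℝ).hasFDerivAt (x := y)).const_mul l).exp
  unfold divA
  simp only [fun y => (hd y).fderiv]
  rw [Finset.sum_eq_single i]
  · have h1 := (ha.hasFDerivAt.mul ((hd x).mul_const l)).fderiv
    have h2 := congrArg (fun T : E →L[ℝ] ℝ => T (EuclideanSpace.single i 1)) h1
    have h3 : (fun y : E => a y * (Real.exp (l * y i) • (l • (EuclideanSpace.proj i : E →L[ℝ] ℝ)))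
        (EuclideanSpace.single i 1)) = a * fun y : E => Real.exp (l * y i) * l := by
      ext y; simp
    rw [h3]
    refine h2.trans ?_
    simp
    ring
  · intro j _ hj
    have h3 : (fun y : E => a y * (Real.exp (l * y i) • (l • (EuclideanSpace.proj i : E →L[ℝ] ℝ)))
        (EuclideanSpace.single j 1)) = fun _ => 0 := by
      ext y; simp [hj.symm]
    rw [h3]
    simp
  · simp

/-- One-sided comparison: two solutions ordered on the boundary are ordered inside. -/
lemma le_of_solutions (hd : 1 ≤ d) {Ω U : Set E}
    (hΩo : IsOpen Ω) (hΩb : Bornology.IsBounded Ω)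
    (hU : IsOpen U) (hUΩ : closure Ω ⊆ U)
    {a b c : E → ℝ}
    (ha : ContDiffOn ℝ 1 a U) {a₀ : ℝ} (ha₀ : 0 < a₀) (halb : ∀ x ∈ Ω, a₀ ≤ a x)
    {θ : ℝ} (hθ : 0 ≤ θ)
    (hbnn : ∀ x ∈ Ω, 0 ≤ b x) (hcnp : ∀ x ∈ Ω, c x ≤ 0)
    {Ψ₁ Ψ₂ : E → ℝ}
    (hΨ₁2 : ContDiffOn ℝ 2 Ψ₁ Ω) (hΨ₁c : ContinuousOn Ψ₁ (closure Ω))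
    (hΨ₂2 : ContDiffOn ℝ 2 Ψ₂ Ω) (hΨ₂c : ContinuousOn Ψ₂ (closure Ω))
    (hΨ₂pos : ∀ x ∈ closure Ω, 0 < Ψ₂ x)
    (heq₁ : ∀ x ∈ Ω, divA a Ψ₁ x = b x * Ψ₁ x + c x * Ψ₁ x ^ (-θ))
    (heq₂ : ∀ x ∈ Ω, divA a Ψ₂ x = b x * Ψ₂ x + c x * Ψ₂ x ^ (-θ))
    (hbdry : ∀ x ∈ frontier Ω, Ψ₁ x ≤ Ψ₂ x) :
    ∀ x ∈ Ω, Ψ₁ x ≤ Ψ₂ x := by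
  intro x₀ hx₀
  by_contra! hlt
  have hK : IsCompact (closure Ω) := hΩb.isCompact_closure
  let i : Fin d := ⟨0, hd⟩
  set e : E := EuclideanSpace.single i (1 : ℝ) with he
  have hda : ContinuousOn (fun y => fderiv ℝ a y e) (closure Ω) :=
    ((ha.continuousOn_fderiv_of_isOpen hU le_rfl).mono hUΩ).clm_apply continuousOn_const
  obtain ⟨C, hC⟩ := hK.exists_bound_of_continuousOn hda
  have hC0 : 0 ≤ C := (norm_nonneg _).trans (hC x₀ (subset_closure hx₀))
  set l : ℝ := (C + 1) / a₀ with hl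
  have hlpos : 0 < l := by positivity
  have hla : l * a₀ = C + 1 := by rw [hl]; field_simp
  set h : E → ℝ := fun y => Real.exp (l * y i) with hh
  have hh2 : ContDiff ℝ 2 h := contDiff_exp_coord i l
  obtain ⟨M, hM⟩ := hK.exists_bound_of_continuousOn hh2.continuous.continuousOn
  have hhM : ∀ y ∈ closure Ω, h y ≤ M := fun y hy => (le_abs_self _).trans (hM y hy)
  have hM0 : 0 < M := (Real.exp_pos _).trans_le (hhM x₀ (subset_closure hx₀))
  -- With this `ε` the perturbation is at most `(Ψ₁ - Ψ₂) x₀` on `closure Ω`.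
  set ε : ℝ := (Ψ₁ x₀ - Ψ₂ x₀) / M with hε
  have hεpos : 0 < ε := div_pos (by linarith) hM0
  have hεM : ε * M = Ψ₁ x₀ - Ψ₂ x₀ := by rw [hε]; field_simp
  set v : E → ℝ := fun y => Ψ₁ y - Ψ₂ y + ε * h y with hv
  have hvc : ContinuousOn v (closure Ω) :=
    (hΨ₁c.sub hΨ₂c).add (continuousOn_const.mul hh2.continuous.continuousOn)
  obtain ⟨x, hx, hxmax⟩ := hK.exists_isMaxOn ⟨x₀, subset_closure hx₀⟩ hvc
  have hwx : Ψ₂ x < Ψ₁ x := by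
    have h1 : v x₀ ≤ v x := hxmax (subset_closure hx₀)
    have h2 : ε * h x ≤ ε * M := mul_le_mul_of_nonneg_left (hhM x hx) hεpos.le
    have h3 : 0 < ε * h x₀ := mul_pos hεpos (Real.exp_pos _)
    simp only [hv] at h1
    linarith
  have hxΩ : x ∈ Ω := by
    by_contra hn
    have : x ∈ frontier Ω := ⟨hx, by rwa [hΩo.interior_eq]⟩
    exact absurd (hbdry x this) (not_le.mpr hwx)
  have hnhds : Ω ∈ 𝓝 x := hΩo.mem_nhds hxΩ
  have hax : DifferentiableAt ℝ a x :=
    (ha.contDiffAt (hU.mem_nhds (hUΩ hx))).differentiableAt (by norm_num)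
  have c1 := hΨ₁2.contDiffAt hnhds
  have c2 := hΨ₂2.contDiffAt hnhds
  have c3 : ContDiffAt ℝ 2 h x := hh2.contDiffAt
  have hlm : IsLocalMax v x := hxmax.isLocalMax (mem_of_superset hnhds subset_closure)
  have hvcd : ContDiffAt ℝ 2 v x := (c1.sub c2).add (contDiffAt_const.mul c3)
  have hle := divA_nonpos_of_isLocalMax hax (ha₀.le.trans (halb x hxΩ)) hvcd hlm
  rw [hv, divA_sub_add_mul ε hax c1 c2 c3, heq₁ x hxΩ, heq₂ x hxΩ, hh, divA_exp hax i l] at hle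
  have hb : b x * Ψ₂ x ≤ b x * Ψ₁ x := mul_le_mul_of_nonneg_left hwx.le (hbnn x hxΩ)
  have hc : c x * Ψ₂ x ^ (-θ) ≤ c x * Ψ₁ x ^ (-θ) :=
    mul_le_mul_of_nonpos_left
      (Real.rpow_le_rpow_of_nonpos (hΨ₂pos x hx) hwx.le (by linarith)) (hcnp x hxΩ)
  have hD : 0 < fderiv ℝ a x (EuclideanSpace.single i 1) + l * a x := by
    have h1 := (abs_le.mp (hC x hx)).1
    have h2 : l * a₀ ≤ l * a x := mul_le_mul_of_nonneg_left (halb x hxΩ) hlpos.le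
    simp only [he] at h1
    linarith
  have hpos : 0 < ε * (l * (fderiv ℝ a x (EuclideanSpace.single i 1) + l * a x)
      * Real.exp (l * x i)) := by positivity
  linarith

end

theorem stmt10 {d : ℕ} (hd : 1 ≤ d) (Ω U : Set (EuclideanSpace ℝ (Fin d)))
    (hΩo : IsOpen Ω) (hΩb : Bornology.IsBounded Ω)
    (hU : IsOpen U) (hUΩ : closure Ω ⊆ U)
    (a b c : EuclideanSpace ℝ (Fin d) → ℝ)
    (ha : ContDiffOn ℝ 1 a U) (a₀ : ℝ) (ha₀ : 0 < a₀) (halb : ∀ x ∈ Ω, a₀ ≤ a x)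
    (hbcont : ContinuousOn b (closure Ω)) (hccont : ContinuousOn c (closure Ω))
    (θ : ℝ) (hθ : 0 ≤ θ)
    (hbnn : ∀ x ∈ Ω, 0 ≤ b x) (hcnp : ∀ x ∈ Ω, c x ≤ 0)
    (Ψ₁ Ψ₂ : EuclideanSpace ℝ (Fin d) → ℝ)
    (hΨ₁2 : ContDiffOn ℝ 2 Ψ₁ Ω) (hΨ₁1 : ContDiffOn ℝ 1 Ψ₁ (closure Ω))
    (hΨ₂2 : ContDiffOn ℝ 2 Ψ₂ Ω) (hΨ₂1 : ContDiffOn ℝ 1 Ψ₂ (closure Ω))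
    (hΨ₁pos : ∀ x ∈ closure Ω, 0 < Ψ₁ x) (hΨ₂pos : ∀ x ∈ closure Ω, 0 < Ψ₂ x)
    (heq₁ : ∀ x ∈ Ω, divA a Ψ₁ x = b x * Ψ₁ x + c x * Ψ₁ x ^ (-θ))
    (heq₂ : ∀ x ∈ Ω, divA a Ψ₂ x = b x * Ψ₂ x + c x * Ψ₂ x ^ (-θ))
    (hbdry : ∀ x ∈ frontier Ω, Ψ₁ x = Ψ₂ x) :
    ∀ x ∈ Ω, Ψ₁ x = Ψ₂ x := by
  intro x hx
  exact le_antisymm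
    (le_of_solutions hd hΩo hΩb hU hUΩ ha ha₀ halb hθ hbnn hcnp hΨ₁2 hΨ₁1.continuousOn
      hΨ₂2 hΨ₂1.continuousOn hΨ₂pos heq₁ heq₂ (fun y hy => (hbdry y hy).le) x hx)
    (le_of_solutions hd hΩo hΩb hU hUΩ ha ha₀ halb hθ hbnn hcnp hΨ₂2 hΨ₂1.continuousOn
      hΨ₁2 hΨ₁1.continuousOn hΨ₁pos heq₂ heq₁ (fun y hy => (hbdry y hy).ge) x hx)
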